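/- arXiv:1204.2998 — 3 statements merged into one kernel-verified Lean document; each statement's English description precedes it below -/
import Mathlib

section
/- Fleming's quantum master inequality: for any two unit vectors v and w in a complex Hilbert space H and any bounded self-adjoint linear operator A on H, one has |⟨A⟩_w − ⟨A⟩_v| · |⟨w, v⟩| ≤ (Δ_v A + Δ_w A) · √(1 − |⟨w, v⟩|²). -/
open scoped InnerProductSpace

noncomputable def expVal {H : Type*} [NormedAddCommGroup H] [InnerProductSpace ℂ H]
    (A : H →L[ℂ] H) (v : H) : ℝ := (⟪v, A v⟫_ℂ).re

noncomputable def uncert {H : Type*} [NormedAddCommGroup H] [InnerProductSpace ℂ H]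
    (A : H →L[ℂ] H) (v : H) : ℝ :=
  Real.sqrt ((⟪v, A (A v)⟫_ℂ).re - (expVal A v) ^ 2)

/-!
Split `A v = ⟨A⟩_v v + d_v`, where `d_v` is orthogonal to `v` and has norm `Δ_v A`, and likewise for
`w`. By symmetry of `A`, computing `⟨w, A v⟩` in two ways gives
`(⟨A⟩_w − ⟨A⟩_v) ⟨w, v⟩ = ⟨w, d_v⟩ − ⟨d_w, v⟩`. As `d_v` is orthogonal to `v`, only the component of
`w` orthogonal to `v`, of norm `√(1 − |⟨w, v⟩|²)`, contributes to `⟨w, d_v⟩`, so Cauchy–Schwarz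
bounds this term by `Δ_v A · √(1 − |⟨w, v⟩|²)`; the other term is bounded in the same way.
-/

section UnitVector

variable {𝕜 E : Type*} [RCLike 𝕜] [SeminormedAddCommGroup E] [InnerProductSpace 𝕜 E]

theorem inner_sub_inner_smul_self {v : E} (hv : ‖v‖ = 1) (x : E) :
    ⟪v, x - ⟪v, x⟫_𝕜 • v⟫_𝕜 = 0 := by
  simp [inner_sub_right, inner_smul_right, inner_self_eq_norm_sq_to_K, hv]

theorem norm_sub_inner_smul_sq {v : E} (hv : ‖v‖ = 1) (x : E) :
    ‖x - ⟪v, x⟫_𝕜 • v‖ ^ 2 = ‖x‖ ^ 2 - ‖⟪v, x⟫_𝕜‖ ^ 2 := by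
  have orthogonal : ⟪⟪v, x⟫_𝕜 • v, x - ⟪v, x⟫_𝕜 • v⟫_𝕜 = 0 := by
    rw [inner_smul_left, inner_sub_inner_smul_self hv, mul_zero]
  have pythagoras := norm_add_sq_eq_norm_sq_add_norm_sq_of_inner_eq_zero _ _ orthogonal
  rw [add_sub_cancel, norm_smul, hv, mul_one] at pythagoras
  linarith

theorem norm_inner_le_of_inner_eq_zero {v d : E} (hv : ‖v‖ = 1) (hd : ⟪v, d⟫_𝕜 = 0) (w : E) :
    ‖⟪w, d⟫_𝕜‖ ≤ ‖d‖ * √(‖w‖ ^ 2 - ‖⟪w, v⟫_𝕜‖ ^ 2) :=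
  calc ‖⟪w, d⟫_𝕜‖ = ‖⟪w - ⟪v, w⟫_𝕜 • v, d⟫_𝕜‖ := by
        rw [inner_sub_left, inner_smul_left, hd, mul_zero, sub_zero]
    _ ≤ ‖w - ⟪v, w⟫_𝕜 • v‖ * ‖d‖ := norm_inner_le_norm _ _
    _ = ‖d‖ * √(‖w‖ ^ 2 - ‖⟪w, v⟫_𝕜‖ ^ 2) := by
        rw [norm_inner_symm w v, ← norm_sub_inner_smul_sq hv, Real.sqrt_sq (norm_nonneg _),
          mul_comm]

end UnitVector

section Deviation

variable {H : Type*} [NormedAddCommGroup H] [InnerProductSpace ℂ H] {A : H →L[ℂ] H}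

/-- The deviation `A v - ⟨A⟩_v v` of `A v` from its mean. For symmetric `A` and a unit vector `v` it
is the component of `A v` orthogonal to `v`, and its norm is the uncertainty of `A` in `v`. -/
noncomputable def deviation (A : H →L[ℂ] H) (v : H) : H :=
  A v - (expVal A v : ℂ) • v

theorem ofReal_expVal (hA : (A : H →ₗ[ℂ] H).IsSymmetric) (v : H) :
    (expVal A v : ℂ) = ⟪v, A v⟫_ℂ :=
  hA.coe_re_inner_self_apply v

theorem deviation_eq_sub_inner_smul (hA : (A : H →ₗ[ℂ] H).IsSymmetric) (v : H) :
    deviation A v = A v - ⟪v, A v⟫_ℂ • v := by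
  rw [deviation, ofReal_expVal hA]

theorem inner_deviation_eq_zero (hA : (A : H →ₗ[ℂ] H).IsSymmetric) {v : H} (hv : ‖v‖ = 1) :
    ⟪v, deviation A v⟫_ℂ = 0 := by
  rw [deviation_eq_sub_inner_smul hA, inner_sub_inner_smul_self hv]

theorem norm_deviation (hA : (A : H →ₗ[ℂ] H).IsSymmetric) {v : H} (hv : ‖v‖ = 1) :
    ‖deviation A v‖ = uncert A v := by
  have second_moment : (⟪v, A (A v)⟫_ℂ).re = ‖A v‖ ^ 2 := by
    rw [← hA.apply_clm v (A v)]
    exact inner_self_eq_norm_sq (𝕜 := ℂ) (A v)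
  have mean_sq : expVal A v ^ 2 = ‖⟪v, A v⟫_ℂ‖ ^ 2 := by
    rw [← ofReal_expVal hA, Complex.norm_real, Real.norm_eq_abs, sq_abs]
  rw [uncert, second_moment, mean_sq, ← norm_sub_inner_smul_sq hv,
    ← deviation_eq_sub_inner_smul hA, Real.sqrt_sq (norm_nonneg _)]

theorem norm_inner_deviation_le (hA : (A : H →ₗ[ℂ] H).IsSymmetric) {v w : H}
    (hv : ‖v‖ = 1) (hw : ‖w‖ = 1) :
    ‖⟪w, deviation A v⟫_ℂ‖ ≤ uncert A v * √(1 - ‖⟪w, v⟫_ℂ‖ ^ 2) := by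
  simpa only [norm_deviation hA hv, hw, one_pow] using
    norm_inner_le_of_inner_eq_zero hv (inner_deviation_eq_zero hA hv) w

theorem expVal_sub_expVal_mul_inner (hA : (A : H →ₗ[ℂ] H).IsSymmetric) (v w : H) :
    ((expVal A w - expVal A v : ℝ) : ℂ) * ⟪w, v⟫_ℂ =
      ⟪w, deviation A v⟫_ℂ - ⟪deviation A w, v⟫_ℂ := by
  simp only [deviation, inner_sub_left, inner_sub_right, inner_smul_left, inner_smul_right,
    hA.apply_clm w v, Complex.conj_ofReal, Complex.ofReal_sub]
  ring

end Deviation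

theorem fleming_qmie_general {H : Type*} [NormedAddCommGroup H] [InnerProductSpace ℂ H]
    (v w : H) (hv : ‖v‖ = 1) (hw : ‖w‖ = 1)
    (A : H →L[ℂ] H) (hA : (A : H →ₗ[ℂ] H).IsSymmetric) :
    |expVal A w - expVal A v| * ‖⟪w, v⟫_ℂ‖ ≤
      (uncert A v + uncert A w) * √(1 - ‖⟪w, v⟫_ℂ‖ ^ 2) := by
  have bound_v : ‖⟪w, deviation A v⟫_ℂ‖ ≤ uncert A v * √(1 - ‖⟪w, v⟫_ℂ‖ ^ 2) :=
    norm_inner_deviation_le hA hv hw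
  have bound_w : ‖⟪deviation A w, v⟫_ℂ‖ ≤ uncert A w * √(1 - ‖⟪w, v⟫_ℂ‖ ^ 2) := by
    rw [norm_inner_symm, norm_inner_symm w v]
    exact norm_inner_deviation_le hA hw hv
  calc |expVal A w - expVal A v| * ‖⟪w, v⟫_ℂ‖
      = ‖((expVal A w - expVal A v : ℝ) : ℂ) * ⟪w, v⟫_ℂ‖ := by
        rw [norm_mul, Complex.norm_real, Real.norm_eq_abs]
    _ = ‖⟪w, deviation A v⟫_ℂ - ⟪deviation A w, v⟫_ℂ‖ := by
        rw [expVal_sub_expVal_mul_inner hA]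
    _ ≤ ‖⟪w, deviation A v⟫_ℂ‖ + ‖⟪deviation A w, v⟫_ℂ‖ := norm_sub_le _ _
    _ ≤ (uncert A v + uncert A w) * √(1 - ‖⟪w, v⟫_ℂ‖ ^ 2) := by
        rw [add_mul]
        exact add_le_add bound_v bound_w

/-- Fleming's quantum master inequality. -/
theorem fleming_qmie {H : Type*} [NormedAddCommGroup H] [InnerProductSpace ℂ H]
    [CompleteSpace H] (v w : H) (hv : ‖v‖ = 1) (hw : ‖w‖ = 1)
    (A : H →L[ℂ] H) (hA : IsSelfAdjoint A) :
    |expVal A w - expVal A v| * ‖⟪w, v⟫_ℂ‖ ≤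
      (uncert A v + uncert A w) * Real.sqrt (1 - ‖⟪w, v⟫_ℂ‖ ^ 2) :=
  fleming_qmie_general v w hv hw A hA.isSymmetric
end

section
/- Uncertainties of the parametrized saturating operator: with v, w, θ, e₁, e₂ and A₀ as in the parametrized construction (A₀ = cos α (e₁⟨e₁,·⟩ − e₂⟨e₂,·⟩) + sin α (e₁⟨e₂,·⟩ + e₂⟨e₁,·⟩) on span{e₁,e₂}, zero on the orthogonal complement), one has (Δ_v A₀)² = sin²(θ+α) and (Δ_w A₀)² = sin²(θ−α). -/
open scoped InnerProductSpace

/-- The rank-one operator `z ↦ ⟨y, z⟩ x`. -/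
noncomputable def rankOne {H : Type*} [NormedAddCommGroup H] [InnerProductSpace ℂ H]
    (x y : H) : H →L[ℂ] H := (innerSL ℂ y).smulRight x

/-!
On the real circle `φ ↦ cos φ e₁ + sin φ e₂` the operator `A₀` acts as the reflection `φ ↦ α - φ`.
Hence `A₀²` fixes every point of the circle, while `⟨A₀⟩` at `φ` is `cos (2φ - α)`, the inner
product of a point with its mirror image; so the uncertainty at `φ` is `|sin (2φ - α)|`. The unit
vectors `v` and `w` lie at `φ = -θ/2` and `φ = θ/2`, symmetrically about their bisector `e₁`.
-/

theorem sin_half_ne_zero_and_cos_half_ne_zero {θ : ℝ} (hθ : Real.sin θ ≠ 0) :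
    Real.sin (θ / 2) ≠ 0 ∧ Real.cos (θ / 2) ≠ 0 := by
  rw [← mul_div_cancel₀ θ (two_ne_zero' ℝ), Real.sin_two_mul] at hθ
  exact ⟨right_ne_zero_of_mul (left_ne_zero_of_mul hθ), right_ne_zero_of_mul hθ⟩

section Frame

variable {𝕜 H : Type*} [RCLike 𝕜] [NormedAddCommGroup H] [InnerProductSpace 𝕜 H]

theorem norm_add_eq_two_mul_abs_cos_half {v w : H} {θ : ℝ} (hv : ‖v‖ = 1) (hw : ‖w‖ = 1)
    (hvw : RCLike.re ⟪v, w⟫_𝕜 = Real.cos θ) : ‖v + w‖ = 2 * |Real.cos (θ / 2)| := by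
  refine (sq_eq_sq₀ (norm_nonneg _) (by positivity)).mp ?_
  rw [norm_add_sq (𝕜 := 𝕜), hv, hw, hvw, mul_pow, sq_abs, Real.cos_sq,
    mul_div_cancel₀ θ two_ne_zero]
  ring

theorem norm_sub_eq_two_mul_abs_sin_half {v w : H} {θ : ℝ} (hv : ‖v‖ = 1) (hw : ‖w‖ = 1)
    (hvw : RCLike.re ⟪v, w⟫_𝕜 = Real.cos θ) : ‖v - w‖ = 2 * |Real.sin (θ / 2)| := by
  refine (sq_eq_sq₀ (norm_nonneg _) (by positivity)).mp ?_
  rw [norm_sub_sq (𝕜 := 𝕜), hv, hw, hvw, mul_pow, sq_abs, Real.sin_sq_eq_half_sub,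
    mul_div_cancel₀ θ two_ne_zero]
  ring

theorem inner_add_sub_eq_zero_of_norm_eq {v w : H} (hnorm : ‖v‖ = ‖w‖)
    (hsymm : ⟪v, w⟫_𝕜 = ⟪w, v⟫_𝕜) : ⟪v + w, w - v⟫_𝕜 = 0 := by
  rw [inner_add_left, inner_sub_right, inner_sub_right, inner_self_eq_norm_sq_to_K,
    inner_self_eq_norm_sq_to_K, hnorm, hsymm]
  ring

variable (𝕜) in
/-- The point at angle `φ` on the real circle spanned by a pair `e` of vectors; for orthonormal
`e` these are the unit vectors of the plane of `e` with real coordinates. -/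
noncomputable def circlePoint (e : Fin 2 → H) (φ : ℝ) : H :=
  (Real.cos φ : 𝕜) • e 0 + (Real.sin φ : 𝕜) • e 1

theorem inner_circlePoint {e : Fin 2 → H} (he : Orthonormal 𝕜 e) (φ ψ : ℝ) :
    ⟪circlePoint 𝕜 e φ, circlePoint 𝕜 e ψ⟫_𝕜 = (Real.cos (φ - ψ) : 𝕜) := by
  simp only [circlePoint, inner_add_left, inner_add_right, inner_smul_left, inner_smul_right,
    RCLike.conj_ofReal, orthonormal_iff_ite.mp he, Real.cos_sub, RCLike.ofReal_add,
    RCLike.ofReal_mul, Fin.isValue, zero_ne_one, one_ne_zero, if_true, if_false]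
  ring

theorem norm_circlePoint {e : Fin 2 → H} (he : Orthonormal 𝕜 e) (φ : ℝ) :
    ‖circlePoint 𝕜 e φ‖ = 1 := by
  rw [norm_eq_sqrt_re_inner (𝕜 := 𝕜), inner_circlePoint he, sub_self, Real.cos_zero,
    RCLike.ofReal_re, Real.sqrt_one]

variable (𝕜) in
/-- The pair `(e₁, e₂)` of rescaled sum and difference of `v` and `w`, where `θ` is the angle
between `v` and `w`. It is meaningful only if `sin θ ≠ 0`: otherwise one of the scalars is
`0⁻¹ = 0`. -/
noncomputable def bisectorFrame (θ : ℝ) (v w : H) : Fin 2 → H :=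
  ![((2 * Real.cos (θ / 2) : ℝ) : 𝕜)⁻¹ • (v + w), ((2 * Real.sin (θ / 2) : ℝ) : 𝕜)⁻¹ • (w - v)]

theorem orthonormal_bisectorFrame {v w : H} {θ : ℝ} (hv : ‖v‖ = 1) (hw : ‖w‖ = 1)
    (hvw : ⟪v, w⟫_𝕜 = (Real.cos θ : 𝕜)) (hθ : Real.sin θ ≠ 0) :
    Orthonormal 𝕜 (bisectorFrame 𝕜 θ v w) := by
  obtain ⟨hsin, hcos⟩ := sin_half_ne_zero_and_cos_half_ne_zero hθ
  have hwv : ⟪w, v⟫_𝕜 = (Real.cos θ : 𝕜) := by rw [← inner_conj_symm, hvw, RCLike.conj_ofReal]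
  have sum_norm := norm_add_eq_two_mul_abs_cos_half (𝕜 := 𝕜) hv hw (by rw [hvw, RCLike.ofReal_re])
  have diff_norm := norm_sub_eq_two_mul_abs_sin_half (𝕜 := 𝕜) hw hv (by rw [hwv, RCLike.ofReal_re])
  have orthogonal := inner_add_sub_eq_zero_of_norm_eq (hv.trans hw.symm) (hvw.trans hwv.symm)
  have norm_e₁ : ‖bisectorFrame 𝕜 θ v w 0‖ = 1 := by
    rw [bisectorFrame, Matrix.cons_val_zero, norm_smul, sum_norm, norm_inv, RCLike.norm_ofReal,
      abs_mul, abs_two, inv_mul_cancel₀ (mul_ne_zero two_ne_zero (abs_ne_zero.mpr hcos))]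
  have norm_e₂ : ‖bisectorFrame 𝕜 θ v w 1‖ = 1 := by
    rw [bisectorFrame, Matrix.cons_val_one, Matrix.cons_val_zero, norm_smul, diff_norm, norm_inv,
      RCLike.norm_ofReal, abs_mul, abs_two,
      inv_mul_cancel₀ (mul_ne_zero two_ne_zero (abs_ne_zero.mpr hsin))]
  have inner_e₁_e₂ : ⟪bisectorFrame 𝕜 θ v w 0, bisectorFrame 𝕜 θ v w 1⟫_𝕜 = 0 := by
    rw [bisectorFrame, Matrix.cons_val_zero, Matrix.cons_val_one, Matrix.cons_val_zero,
      inner_smul_left, inner_smul_right, orthogonal, mul_zero, mul_zero]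
  refine ⟨Fin.forall_fin_two.mpr ⟨norm_e₁, norm_e₂⟩, ?_⟩
  simp [Pairwise, Fin.forall_fin_two, inner_e₁_e₂, inner_eq_zero_symm.mp inner_e₁_e₂]

theorem cos_half_smul_bisectorFrame_zero {θ : ℝ} (hθ : Real.cos (θ / 2) ≠ 0) (v w : H) :
    (Real.cos (θ / 2) : 𝕜) • bisectorFrame 𝕜 θ v w 0 = (2 : 𝕜)⁻¹ • (v + w) := by
  have hcos : (Real.cos (θ / 2) : 𝕜) ≠ 0 := RCLike.ofReal_ne_zero.mpr hθ
  simp only [bisectorFrame, Matrix.cons_val_zero, smul_smul, RCLike.ofReal_mul, RCLike.ofReal_ofNat]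
  field_simp

theorem sin_half_smul_bisectorFrame_one {θ : ℝ} (hθ : Real.sin (θ / 2) ≠ 0) (v w : H) :
    (Real.sin (θ / 2) : 𝕜) • bisectorFrame 𝕜 θ v w 1 = (2 : 𝕜)⁻¹ • (w - v) := by
  have hsin : (Real.sin (θ / 2) : 𝕜) ≠ 0 := RCLike.ofReal_ne_zero.mpr hθ
  simp only [bisectorFrame, Matrix.cons_val_one, Matrix.cons_val_zero, smul_smul,
    RCLike.ofReal_mul, RCLike.ofReal_ofNat]
  field_simp

theorem circlePoint_bisectorFrame_neg_half {θ : ℝ} (hθ : Real.sin θ ≠ 0) (v w : H) :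
    circlePoint 𝕜 (bisectorFrame 𝕜 θ v w) (-(θ / 2)) = v := by
  obtain ⟨hsin, hcos⟩ := sin_half_ne_zero_and_cos_half_ne_zero hθ
  rw [circlePoint, Real.cos_neg, Real.sin_neg, RCLike.ofReal_neg, neg_smul,
    cos_half_smul_bisectorFrame_zero hcos, sin_half_smul_bisectorFrame_one hsin]
  module

theorem circlePoint_bisectorFrame_half {θ : ℝ} (hθ : Real.sin θ ≠ 0) (v w : H) :
    circlePoint 𝕜 (bisectorFrame 𝕜 θ v w) (θ / 2) = w := by
  obtain ⟨hsin, hcos⟩ := sin_half_ne_zero_and_cos_half_ne_zero hθ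
  rw [circlePoint, cos_half_smul_bisectorFrame_zero hcos, sin_half_smul_bisectorFrame_one hsin]
  module

end Frame

section Operator

variable {H : Type*} [NormedAddCommGroup H] [InnerProductSpace ℂ H]

theorem rankOne_apply (x y z : H) : rankOne x y z = ⟪y, z⟫_ℂ • x := rfl

theorem uncert_eq_sqrt_of_apply_apply_eq_self {A : H →L[ℂ] H} {x : H} (hx : ‖x‖ = 1)
    (hA : A (A x) = x) : uncert A x = √(1 - expVal A x ^ 2) := by
  rw [uncert, hA, inner_self_eq_norm_sq_to_K, hx]
  simp

/-- The operator `A₀` with parameter `α` relative to the pair `e`. -/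
noncomputable def saturatingOperator (e : Fin 2 → H) (α : ℝ) : H →L[ℂ] H :=
  (Real.cos α : ℂ) • (rankOne (e 0) (e 0) - rankOne (e 1) (e 1)) +
    (Real.sin α : ℂ) • (rankOne (e 0) (e 1) + rankOne (e 1) (e 0))

theorem saturatingOperator_circlePoint {e : Fin 2 → H} (he : Orthonormal ℂ e) (α φ : ℝ) :
    saturatingOperator e α (circlePoint ℂ e φ) = circlePoint ℂ e (α - φ) := by
  have apply_zero : saturatingOperator e α (e 0) =
      (Real.cos α : ℂ) • e 0 + (Real.sin α : ℂ) • e 1 := by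
    simp [saturatingOperator, rankOne_apply, he.1, he.inner_eq_zero]
  have apply_one : saturatingOperator e α (e 1) =
      (Real.sin α : ℂ) • e 0 - (Real.cos α : ℂ) • e 1 := by
    simp [saturatingOperator, rankOne_apply, he.1, he.inner_eq_zero, sub_eq_neg_add]
  simp only [circlePoint, map_add, map_smul, apply_zero, apply_one, Real.cos_sub, Real.sin_sub,
    Complex.coe_algebraMap, Complex.ofReal_sub, Complex.ofReal_mul]
  module

theorem expVal_saturatingOperator_circlePoint {e : Fin 2 → H} (he : Orthonormal ℂ e) (α φ : ℝ) :
    expVal (saturatingOperator e α) (circlePoint ℂ e φ) = Real.cos (2 * φ - α) := by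
  rw [expVal, saturatingOperator_circlePoint he, inner_circlePoint he]
  exact (Complex.ofReal_re _).trans (congrArg Real.cos (by ring))

theorem uncert_saturatingOperator_circlePoint {e : Fin 2 → H} (he : Orthonormal ℂ e) (α φ : ℝ) :
    uncert (saturatingOperator e α) (circlePoint ℂ e φ) = |Real.sin (2 * φ - α)| := by
  have involutive : saturatingOperator e α (saturatingOperator e α (circlePoint ℂ e φ)) =
      circlePoint ℂ e φ := by
    rw [saturatingOperator_circlePoint he, saturatingOperator_circlePoint he, sub_sub_cancel]
  rw [uncert_eq_sqrt_of_apply_apply_eq_self (norm_circlePoint he φ) involutive,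
    expVal_saturatingOperator_circlePoint he, Real.abs_sin_eq_sqrt_one_sub_cos_sq]

end Operator

theorem uncert_saturating_operator_general {H : Type*} [NormedAddCommGroup H]
    [InnerProductSpace ℂ H] (v w : H) (hv : ‖v‖ = 1) (hw : ‖w‖ = 1)
    (θ : ℝ) (hθ : Real.sin θ ≠ 0) (hcos : ⟪v, w⟫_ℂ = (Real.cos θ : ℂ))
    (α : ℝ) (e₁ e₂ : H)
    (he₁ : e₁ = ((2 * Real.cos (θ / 2) : ℝ) : ℂ)⁻¹ • (v + w))
    (he₂ : e₂ = ((2 * Real.sin (θ / 2) : ℝ) : ℂ)⁻¹ • (w - v))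
    (A₀ : H →L[ℂ] H)
    (hA₀ : A₀ = ((Real.cos α : ℝ) : ℂ) • (rankOne e₁ e₁ - rankOne e₂ e₂) +
      ((Real.sin α : ℝ) : ℂ) • (rankOne e₁ e₂ + rankOne e₂ e₁)) :
    uncert A₀ v = |Real.sin (θ + α)| ∧ uncert A₀ w = |Real.sin (θ - α)| := by
  have he := orthonormal_bisectorFrame hv hw hcos hθ
  obtain rfl : A₀ = saturatingOperator (bisectorFrame ℂ θ v w) α := by
    rw [hA₀, he₁, he₂]; rfl
  constructor
  · have h := uncert_saturatingOperator_circlePoint he α (-(θ / 2))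
    rwa [circlePoint_bisectorFrame_neg_half hθ, show 2 * -(θ / 2) - α = -(θ + α) by ring,
      Real.sin_neg, abs_neg] at h
  · have h := uncert_saturatingOperator_circlePoint he α (θ / 2)
    rwa [circlePoint_bisectorFrame_half hθ, mul_div_cancel₀ θ two_ne_zero] at h

/-- Uncertainties of the parametrized saturating operator `A₀`. -/
theorem uncert_saturating_operator {H : Type*} [NormedAddCommGroup H]
    [InnerProductSpace ℂ H] [CompleteSpace H] (v w : H) (hv : ‖v‖ = 1) (hw : ‖w‖ = 1)
    (θ : ℝ) (hθ : θ ∈ Set.Ioo 0 (Real.pi / 2)) (hcos : ⟪v, w⟫_ℂ = (Real.cos θ : ℂ))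
    (α : ℝ) (e₁ e₂ : H)
    (he₁ : e₁ = ((2 * Real.cos (θ / 2) : ℝ) : ℂ)⁻¹ • (v + w))
    (he₂ : e₂ = ((2 * Real.sin (θ / 2) : ℝ) : ℂ)⁻¹ • (w - v))
    (A₀ : H →L[ℂ] H)
    (hA₀ : A₀ = ((Real.cos α : ℝ) : ℂ) • (rankOne e₁ e₁ - rankOne e₂ e₂) +
      ((Real.sin α : ℝ) : ℂ) • (rankOne e₁ e₂ + rankOne e₂ e₁)) :
    (uncert A₀ v) ^ 2 = Real.sin (θ + α) ^ 2 ∧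
      (uncert A₀ w) ^ 2 = Real.sin (θ - α) ^ 2 := by
  have hsin : Real.sin θ ≠ 0 :=
    (Real.sin_pos_of_pos_of_lt_pi hθ.1 (hθ.2.trans (half_lt_self Real.pi_pos))).ne'
  simp only [uncert_saturating_operator_general v w hv hw θ hsin hcos α e₁ e₂ he₁ he₂ A₀ hA₀,
    sq_abs, and_self]
end

section
/- Squared form of the quantum master inequality: for any two unit vectors v and w in a complex Hilbert space H with |⟨w, v⟩| = cos θ, θ ∈ [0, π/2], and any bounded self-adjoint operator A on H, one has [(⟨A⟩_w − ⟨A⟩_v)² + (Δ_v A + Δ_w A)²] · cos²θ ≤ (Δ_v A + Δ_w A)². -/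
open scoped InnerProductSpace

/-!
Let `P v` be the projection onto the orthogonal complement of `v`. By Pythagoras, `P v (A v)` has
norm `Δ_v A`, and `P v w` and `P w v` have norm `sin θ`. Since `A v = ⟨A⟩_v v + P v (A v)`, and
likewise for `w`, evaluating `⟪w, A v⟫ = ⟪A w, v⟫` both ways gives
`(⟨A⟩_w - ⟨A⟩_v) ⟪w, v⟫ = ⟪w, P v (A v)⟫ - ⟪P w (A w), v⟫`.
As `P v` is a symmetric idempotent, Cauchy–Schwarz bounds the first term on the right by
`sin θ * Δ_v A`, and similarly the second by `sin θ * Δ_w A`. Squaring yields the claim.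
-/

section Projection

variable {𝕜 E : Type*} [RCLike 𝕜] [NormedAddCommGroup E] [InnerProductSpace 𝕜 E]

lemma norm_inner_starProjection_le (K : Submodule 𝕜 E) [K.HasOrthogonalProjection] (x y : E) :
    ‖⟪x, K.starProjection y⟫_𝕜‖ ≤ ‖K.starProjection x‖ * ‖K.starProjection y‖ := by
  have inner_eq : ⟪x, K.starProjection y⟫_𝕜 = ⟪K.starProjection x, K.starProjection y⟫_𝕜 := by
    rw [K.inner_starProjection_left_eq_right,
      K.starProjection_eq_self_iff.2 (K.starProjection_apply_mem y)]
  exact inner_eq ▸ norm_inner_le_norm _ _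

lemma starProjection_orthogonal_unit_singleton {v : E} (hv : ‖v‖ = 1) (w : E) :
    (𝕜 ∙ v)ᗮ.starProjection w = w - ⟪v, w⟫_𝕜 • v := by
  rw [Submodule.starProjection_orthogonal_val, Submodule.starProjection_unit_singleton 𝕜 hv]

lemma norm_sq_starProjection_orthogonal_unit_singleton {v : E} (hv : ‖v‖ = 1) (w : E) :
    ‖(𝕜 ∙ v)ᗮ.starProjection w‖ ^ 2 = ‖w‖ ^ 2 - ‖⟪v, w⟫_𝕜‖ ^ 2 := by
  have pythagoras := Submodule.norm_sq_eq_add_norm_sq_starProjection w (𝕜 ∙ v)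
  rw [Submodule.starProjection_unit_singleton 𝕜 hv, norm_smul, hv, mul_one] at pythagoras
  exact eq_sub_of_add_eq' pythagoras.symm

end Projection

section Expectation

variable {H : Type*} [NormedAddCommGroup H] [InnerProductSpace ℂ H] {A : H →L[ℂ] H} {v w : H}

lemma coe_expVal (hA : A.IsSymmetric) (v : H) : (expVal A v : ℂ) = ⟪v, A v⟫_ℂ :=
  hA.coe_re_inner_self_apply v

lemma uncert_eq_norm_starProjection (hA : A.IsSymmetric) (hv : ‖v‖ = 1) :
    uncert A v = ‖(ℂ ∙ v)ᗮ.starProjection (A v)‖ := by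
  have second_moment : (⟪v, A (A v)⟫_ℂ).re = ‖A v‖ ^ 2 := by
    rw [← hA.apply_clm v (A v)]
    exact inner_self_eq_norm_sq (𝕜 := ℂ) (A v)
  have norm_mean : ‖⟪v, A v⟫_ℂ‖ ^ 2 = expVal A v ^ 2 := by
    rw [← coe_expVal hA, Complex.norm_real, Real.norm_eq_abs, sq_abs]
  rw [uncert, second_moment, ← norm_mean,
    ← norm_sq_starProjection_orthogonal_unit_singleton hv, Real.sqrt_sq (norm_nonneg _)]

lemma expVal_sub_mul_inner (hA : A.IsSymmetric) (hv : ‖v‖ = 1) (hw : ‖w‖ = 1) :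
    ((expVal A w - expVal A v : ℝ) : ℂ) * ⟪w, v⟫_ℂ =
      ⟪w, (ℂ ∙ v)ᗮ.starProjection (A v)⟫_ℂ - ⟪(ℂ ∙ w)ᗮ.starProjection (A w), v⟫_ℂ := by
  rw [starProjection_orthogonal_unit_singleton hv, starProjection_orthogonal_unit_singleton hw,
    ← coe_expVal hA, ← coe_expVal hA, inner_sub_left, inner_sub_right, inner_smul_left,
    inner_smul_right, Complex.conj_ofReal, hA.apply_clm]
  push_cast
  ring

lemma norm_inner_starProjection_apply_le (hA : A.IsSymmetric) (hv : ‖v‖ = 1) (hw : ‖w‖ = 1) :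
    ‖⟪w, (ℂ ∙ v)ᗮ.starProjection (A v)⟫_ℂ‖ ≤ √(1 - ‖⟪w, v⟫_ℂ‖ ^ 2) * uncert A v := by
  have norm_eq_sqrt : ‖(ℂ ∙ v)ᗮ.starProjection w‖ = √(1 - ‖⟪w, v⟫_ℂ‖ ^ 2) := by
    rw [norm_inner_symm, ← one_pow 2, ← hw,
      ← norm_sq_starProjection_orthogonal_unit_singleton hv, Real.sqrt_sq (norm_nonneg _)]
  rw [uncert_eq_norm_starProjection hA hv, ← norm_eq_sqrt]
  exact norm_inner_starProjection_le _ _ _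

theorem abs_expVal_sub_mul_norm_inner_le (hA : A.IsSymmetric) (hv : ‖v‖ = 1) (hw : ‖w‖ = 1) :
    |expVal A w - expVal A v| * ‖⟪w, v⟫_ℂ‖ ≤
      √(1 - ‖⟪w, v⟫_ℂ‖ ^ 2) * (uncert A v + uncert A w) := by
  have bound_v := norm_inner_starProjection_apply_le hA hv hw
  have bound_w := norm_inner_starProjection_apply_le hA hw hv
  rw [norm_inner_symm, norm_inner_symm v w] at bound_w
  calc |expVal A w - expVal A v| * ‖⟪w, v⟫_ℂ‖
      = ‖⟪w, (ℂ ∙ v)ᗮ.starProjection (A v)⟫_ℂ - ⟪(ℂ ∙ w)ᗮ.starProjection (A w), v⟫_ℂ‖ := by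
        rw [← expVal_sub_mul_inner hA hv hw, norm_mul, Complex.norm_real, Real.norm_eq_abs]
    _ ≤ ‖⟪w, (ℂ ∙ v)ᗮ.starProjection (A v)⟫_ℂ‖ + ‖⟪(ℂ ∙ w)ᗮ.starProjection (A w), v⟫_ℂ‖ :=
        norm_sub_le _ _
    _ ≤ √(1 - ‖⟪w, v⟫_ℂ‖ ^ 2) * uncert A v + √(1 - ‖⟪w, v⟫_ℂ‖ ^ 2) * uncert A w :=
        add_le_add bound_v bound_w
    _ = √(1 - ‖⟪w, v⟫_ℂ‖ ^ 2) * (uncert A v + uncert A w) := (mul_add _ _ _).symm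

theorem qmie_squared_general (hA : A.IsSymmetric) (hv : ‖v‖ = 1) (hw : ‖w‖ = 1) :
    ((expVal A w - expVal A v) ^ 2 + (uncert A v + uncert A w) ^ 2) * ‖⟪w, v⟫_ℂ‖ ^ 2 ≤
      (uncert A v + uncert A w) ^ 2 := by
  have norm_inner_sq_le_one : ‖⟪w, v⟫_ℂ‖ ^ 2 ≤ 1 :=
    pow_le_one₀ (norm_nonneg _) (by simpa only [hv, hw, mul_one] using norm_inner_le_norm w v)
  have squared := pow_le_pow_left₀ (by positivity) (abs_expVal_sub_mul_norm_inner_le hA hv hw) 2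
  rw [mul_pow, mul_pow, sq_abs, Real.sq_sqrt (sub_nonneg.2 norm_inner_sq_le_one)] at squared
  linarith

end Expectation

/-- Squared form of Fleming's quantum master inequality. -/
theorem qmie_squared {H : Type*} [NormedAddCommGroup H]
    [InnerProductSpace ℂ H] [CompleteSpace H] (v w : H) (hv : ‖v‖ = 1) (hw : ‖w‖ = 1)
    (θ : ℝ) (hθ : θ ∈ Set.Icc 0 (Real.pi / 2)) (hcos : ‖⟪w, v⟫_ℂ‖ = Real.cos θ)
    (A : H →L[ℂ] H) (hA : IsSelfAdjoint A) :
    ((expVal A w - expVal A v) ^ 2 + (uncert A v + uncert A w) ^ 2) * Real.cos θ ^ 2 ≤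
      (uncert A v + uncert A w) ^ 2 := by
  rw [← hcos]
  exact qmie_squared_general hA.isSymmetric hv hw
end
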